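/- Let (X, ρ) be a complete separable metric space. Assume that for every Borel probability measure μ on the countable product ℕ → X there exists a Borel-measurable map ζ : Ω → (ℕ → X) whose law is μ. Define the L^∞ metric on R(X) by d_∞(ξ, η) = inf { ε > 0 | ℙ[ρ(ξ, η) ≥ ε] = 0 } ∈ [0, ∞]. Then for ξ ∈ R(X) and a sequence (ξₙ)ₙ in R(X), lim_{n→∞} d̂_∞(ξ, ξₙ) = 0 if and only if there exist ξ′ ∈ R(X) and a sequence (ξₙ′)ₙ in R(X) such that L(ξ′) = L(ξ), L(ξₙ′) = L(ξₙ) for all n, and lim_{n→∞} d_∞(ξ′, ξₙ′) = 0. -/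

import Mathlib

open MeasureTheory Filter
open scoped ENNReal Topology

/-- The minimal functional associated with `e`:
`ê(ξ, η) = inf { e(ξ′, η′) | ξ′, η′ measurable, L(ξ′) = L(ξ), L(η′) = L(η) }`. -/
noncomputable def minPM {Ω X : Type*} [MeasurableSpace Ω] [MeasurableSpace X]
    (P : Measure Ω) (e : (Ω → X) → (Ω → X) → ℝ≥0∞) (ξ η : Ω → X) : ℝ≥0∞ :=
  ⨅ (ξ' : Ω → X) (η' : Ω → X) (_ : Measurable ξ') (_ : Measurable η')
    (_ : Measure.map ξ' P = Measure.map ξ P) (_ : Measure.map η' P = Measure.map η P),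
    e ξ' η'

/-- The `L^∞` metric on random variables:
`d_∞(ξ, η) = inf { ε > 0 | ℙ[ρ(ξ, η) ≥ ε] = 0 } ∈ [0, ∞]`. -/
noncomputable def dLinf {Ω X : Type*} [MeasurableSpace Ω] [MetricSpace X]
    (P : Measure Ω) (ξ η : Ω → X) : ℝ≥0∞ :=
  ⨅ (ε : ℝ) (_ : 0 < ε) (_ : P {ω | ε ≤ dist (ξ ω) (η ω)} = 0), ENNReal.ofReal ε

/-!
Every near-optimal coupling of `ξ` and `ξₙ` can be written as `(x, fₙ(x, u))` with `x` of law `L(ξ)`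
and `u` uniform on `[0, 1]` and independent of `x`. Feeding the *same* pair `(x, u)` to all the
`fₙ` realizes these countably many couplings with a common first coordinate. Nothing about `d_∞`
matters beyond its depending on the joint law only.
-/

/-- The probability space `(Ω, P)` is rich enough for `E`: every probability measure on `E` is the
law of a random variable on `Ω`. -/
def RealizesLaws {Ω : Type*} [MeasurableSpace Ω] (P : Measure Ω) (E : Type*) [MeasurableSpace E] :
    Prop :=
  ∀ μ : Measure E, IsProbabilityMeasure μ → ∃ ζ : Ω → E, Measurable ζ ∧ P.map ζ = μ

/-- The functional `e` on pairs of random variables depends only on their joint law, as is required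
of a probability metric. Measurability is imposed because `Measure.map` has the junk value `0` along
a map that is not a.e.-measurable. -/
def IsLawInvariant {Ω X : Type*} [MeasurableSpace Ω] [MeasurableSpace X] (P : Measure Ω)
    (e : (Ω → X) → (Ω → X) → ℝ≥0∞) : Prop :=
  ∀ ⦃a b a' b' : Ω → X⦄, Measurable a → Measurable b → Measurable a' → Measurable b' →
    P.map (fun ω => (a ω, b ω)) = P.map (fun ω => (a' ω, b' ω)) → e a b = e a' b'

section Coupling

variable {α : Type*} [MeasurableSpace α]

theorem exists_measurable_map_prod_unitInterval_eq {β : Type*} [MeasurableSpace β]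
    [StandardBorelSpace β] [Nonempty β] (ρ : Measure (α × β)) [IsFiniteMeasure ρ] :
    ∃ f : α → unitInterval → β, Measurable (Function.uncurry f) ∧
      (ρ.fst.prod volume).map (fun p => (p.1, f p.1 p.2)) = ρ := by
  obtain ⟨f, hf, hfρ⟩ := ρ.condKernel.exists_measurable_map_eq_unitInterval
  have hgraph : Measurable fun p : α × unitInterval => (p.1, f p.1 p.2) := measurable_fst.prodMk hf
  refine ⟨f, hf, ?_⟩
  conv_rhs => rw [← ρ.disintegrate ρ.condKernel]
  ext s hs
  rw [Measure.map_apply hgraph hs, Measure.prod_apply (hgraph hs), Measure.compProd_apply hs]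
  refine lintegral_congr fun x => ?_
  rw [← hfρ x, Measure.map_apply hf.of_uncurry_left (measurable_prodMk_left hs)]
  rfl

theorem exists_measure_map_eq_of_fst_eq {ι : Type*} {β : ι → Type*} [∀ i, MeasurableSpace (β i)]
    [∀ i, StandardBorelSpace (β i)] [∀ i, Nonempty (β i)] {μ : Measure α}
    (ρ : ∀ i, Measure (α × β i)) [∀ i, IsFiniteMeasure (ρ i)] (hρ : ∀ i, (ρ i).fst = μ) :
    ∃ γ : Measure (α × ∀ i, β i),
      γ.fst = μ ∧ ∀ i, γ.map (fun p => (p.1, p.2 i)) = ρ i := by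
  choose f hf hfρ using fun i => exists_measurable_map_prod_unitInterval_eq (ρ i)
  have hglue : Measurable fun p : α × unitInterval => (p.1, fun i => f i p.1 p.2) :=
    measurable_fst.prodMk (measurable_pi_lambda _ hf)
  refine ⟨(μ.prod volume).map fun p => (p.1, fun i => f i p.1 p.2), ?_, fun i => ?_⟩
  · rw [Measure.fst, Measure.map_map measurable_fst hglue]
    exact Measure.fst_prod
  · rw [Measure.map_map (by fun_prop) hglue, ← hfρ i, hρ i]
    rfl

end Coupling

section RandomVariables

variable {Ω : Type*} [MeasurableSpace Ω] {P : Measure Ω}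

theorem RealizesLaws.of_leftInverse {E F : Type*} [MeasurableSpace E] [MeasurableSpace F]
    (hP : RealizesLaws P E) {r : E → F} {s : F → E} (hr : Measurable r) (hs : Measurable s)
    (hrs : Function.LeftInverse r s) : RealizesLaws P F := by
  intro μ _
  obtain ⟨ζ, hζ, hζμ⟩ := hP (μ.map s) (Measure.isProbabilityMeasure_map hs.aemeasurable)
  refine ⟨r ∘ ζ, hr.comp hζ, ?_⟩
  rw [← Measure.map_map hr hζ, hζμ, Measure.map_map hr hs, hrs.comp_eq_id, Measure.map_id]

variable {X : Type*} [MeasurableSpace X]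

theorem RealizesLaws.prod_sequence (hP : RealizesLaws P (ℕ → X)) :
    RealizesLaws P (X × (ℕ → X)) := by
  let cons : X × (ℕ → X) → ℕ → X := fun p k => Nat.casesOn k p.1 p.2
  have hcons : Measurable cons :=
    measurable_pi_lambda _ fun
      | 0 => measurable_fst
      | n + 1 => (measurable_pi_apply n).comp measurable_snd
  have huncons : Measurable fun x : ℕ → X => (x 0, fun n => x (n + 1)) := by fun_prop
  exact hP.of_leftInverse huncons hcons fun _ => rfl

theorem RealizesLaws.exists_common_fst [StandardBorelSpace X] (hP : RealizesLaws P (ℕ → X))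
    {μ : Measure X} [IsProbabilityMeasure μ] (ρ : ℕ → Measure (X × X))
    [∀ n, IsFiniteMeasure (ρ n)] (hρ : ∀ n, (ρ n).fst = μ) :
    ∃ (ξ : Ω → X) (ξs : ℕ → Ω → X), Measurable ξ ∧ (∀ n, Measurable (ξs n)) ∧
      P.map ξ = μ ∧ ∀ n, P.map (fun ω => (ξ ω, ξs n ω)) = ρ n := by
  have : Nonempty X := nonempty_of_isProbabilityMeasure μ
  obtain ⟨γ, hγμ, hγρ⟩ := exists_measure_map_eq_of_fst_eq ρ hρ
  have : IsProbabilityMeasure (γ.map Prod.fst) := by rwa [← Measure.fst, hγμ]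
  obtain ⟨ζ, hζ, hζγ⟩ := hP.prod_sequence γ (Measure.isProbabilityMeasure_of_map Prod.fst)
  refine ⟨fun ω => (ζ ω).1, fun n ω => (ζ ω).2 n, by fun_prop, by fun_prop, ?_, fun n => ?_⟩
  · rw [← hγμ, ← hζγ, Measure.fst, Measure.map_map measurable_fst hζ]
    rfl
  · rw [← hγρ n, ← hζγ, Measure.map_map (by fun_prop) hζ]
    rfl

section Minimal

variable {e : (Ω → X) → (Ω → X) → ℝ≥0∞} {ξ η : Ω → X}

theorem minPM_le {a b : Ω → X} (ha : Measurable a) (hb : Measurable b)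
    (haξ : P.map a = P.map ξ) (hbη : P.map b = P.map η) : minPM P e ξ η ≤ e a b :=
  iInf₂_le_of_le a b <| iInf₂_le_of_le ha hb <| iInf₂_le haξ hbη

theorem exists_le_minPM_add (hξ : Measurable ξ) (hη : Measurable η) {δ : ℝ≥0∞} (hδ : δ ≠ 0) :
    ∃ a b : Ω → X, Measurable a ∧ Measurable b ∧ P.map a = P.map ξ ∧ P.map b = P.map η ∧
      e a b ≤ minPM P e ξ η + δ := by
  by_cases htop : minPM P e ξ η = ∞
  · exact ⟨ξ, η, hξ, hη, rfl, rfl, by simp [htop]⟩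
  · have hlt := ENNReal.lt_add_right htop hδ
    conv_lhs at hlt => rw [minPM]
    simp only [iInf_lt_iff] at hlt
    obtain ⟨a, b, ha, hb, haξ, hbη, hab⟩ := hlt
    exact ⟨a, b, ha, hb, haξ, hbη, hab.le⟩

theorem IsLawInvariant.exists_forall_le_minPM_add [StandardBorelSpace X] [IsProbabilityMeasure P]
    (he : IsLawInvariant P e) (hP : RealizesLaws P (ℕ → X)) (hξ : Measurable ξ)
    {ξs : ℕ → Ω → X} (hξs : ∀ n, Measurable (ξs n)) {δ : ℕ → ℝ≥0∞} (hδ : ∀ n, δ n ≠ 0) :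
    ∃ (ξ' : Ω → X) (ξs' : ℕ → Ω → X), Measurable ξ' ∧ (∀ n, Measurable (ξs' n)) ∧
      P.map ξ' = P.map ξ ∧ (∀ n, P.map (ξs' n) = P.map (ξs n)) ∧
      ∀ n, e ξ' (ξs' n) ≤ minPM P e ξ (ξs n) + δ n := by
  choose a b ha hb haξ hbξs hab using fun n =>
    exists_le_minPM_add (P := P) (e := e) hξ (hξs n) (hδ n)
  have : IsProbabilityMeasure (P.map ξ) := Measure.isProbabilityMeasure_map hξ.aemeasurable
  obtain ⟨ξ', ξs', hξ', hξs', hlaw, hjoint⟩ := hP.exists_common_fst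
    (fun n => P.map fun ω => (a n ω, b n ω))
    fun n => (Measure.fst_map_prodMk (hb n)).trans (haξ n)
  refine ⟨ξ', ξs', hξ', hξs', hlaw, fun n => ?_, fun n => ?_⟩
  · rw [← hbξs n, ← Measure.snd_map_prodMk hξ', hjoint n, Measure.snd_map_prodMk (ha n)]
  · exact (he hξ' (hξs' n) (ha n) (hb n) (hjoint n)).trans_le (hab n)

end Minimal

end RandomVariables

theorem isLawInvariant_dLinf {Ω X : Type*} [MeasurableSpace Ω] [MetricSpace X]
    [SecondCountableTopology X] [MeasurableSpace X] [OpensMeasurableSpace X] (P : Measure Ω) :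
    IsLawInvariant P (dLinf (X := X) P) := by
  intro a b a' b' ha hb ha' hb' hlaw
  have htail (ε : ℝ) : P {ω | ε ≤ dist (a ω) (b ω)} = P {ω | ε ≤ dist (a' ω) (b' ω)} := by
    have hs : MeasurableSet {p : X × X | ε ≤ dist p.1 p.2} :=
      measurableSet_le measurable_const measurable_dist
    have heq := congrArg (fun ν => ν {p : X × X | ε ≤ dist p.1 p.2}) hlaw
    simp only [Measure.map_apply (ha.prodMk hb) hs, Measure.map_apply (ha'.prodMk hb') hs] at heq
    exact heq
  simp only [dLinf, htail]

theorem tendsto_minPM_dLinf_zero_iff_general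
    {Ω X : Type*} [MeasurableSpace Ω] [MeasurableSpace X] [StandardBorelSpace X]
    {P : Measure Ω} [IsProbabilityMeasure P] (hP : RealizesLaws P (ℕ → X))
    {e : (Ω → X) → (Ω → X) → ℝ≥0∞} (he : IsLawInvariant P e)
    {ξ : Ω → X} (hξ : Measurable ξ) {ξs : ℕ → Ω → X} (hξs : ∀ n, Measurable (ξs n)) :
    Tendsto (fun n => minPM P e ξ (ξs n)) atTop (𝓝 0) ↔
    ∃ (ξ' : Ω → X) (ξs' : ℕ → Ω → X), Measurable ξ' ∧ (∀ n, Measurable (ξs' n)) ∧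
      P.map ξ' = P.map ξ ∧ (∀ n, P.map (ξs' n) = P.map (ξs n)) ∧
      Tendsto (fun n => e ξ' (ξs' n)) atTop (𝓝 0) := by
  constructor
  · intro hmin
    obtain ⟨ξ', ξs', hξ', hξs', hlaw, hlaws, hle⟩ := he.exists_forall_le_minPM_add hP hξ hξs
      fun n => ENNReal.inv_ne_zero.2 (ENNReal.natCast_ne_top n)
    refine ⟨ξ', ξs', hξ', hξs', hlaw, hlaws, ?_⟩
    have hbound : Tendsto (fun n : ℕ => minPM P e ξ (ξs n) + (n : ℝ≥0∞)⁻¹) atTop (𝓝 0) := by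
      simpa only [add_zero] using hmin.add ENNReal.tendsto_inv_nat_nhds_zero
    exact tendsto_of_tendsto_of_tendsto_of_le_of_le tendsto_const_nhds hbound
      (fun _ => zero_le) hle
  · rintro ⟨ξ', ξs', hξ', hξs', hlaw, hlaws, hlim⟩
    exact tendsto_of_tendsto_of_tendsto_of_le_of_le tendsto_const_nhds hlim
      (fun _ => zero_le) fun n => minPM_le hξ' (hξs' n) hlaw (hlaws n)

/-- On a complete separable metric space `X`, assuming every Borel
probability measure on `ℕ → X` is the law of some random variable,
`d̂_∞(ξ, ξₙ) → 0` iff there exist representatives `ξ′, (ξₙ′)ₙ` with `L(ξ′) = L(ξ)`,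
`L(ξₙ′) = L(ξₙ)` and `d_∞(ξ′, ξₙ′) → 0`. -/
theorem tendsto_minPM_dLinf_zero_iff
    {Ω X : Type*} [MeasurableSpace Ω]
    [MetricSpace X] [CompleteSpace X] [TopologicalSpace.SeparableSpace X]
    [MeasurableSpace X] [BorelSpace X]
    (P : Measure Ω) [IsProbabilityMeasure P]
    (hrich : ∀ μ : Measure (ℕ → X), IsProbabilityMeasure μ →
      ∃ ζ : Ω → ℕ → X, Measurable ζ ∧ Measure.map ζ P = μ)
    (ξ : Ω → X) (hξ : Measurable ξ)
    (ξs : ℕ → Ω → X) (hξs : ∀ n, Measurable (ξs n)) :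
    Tendsto (fun n => minPM P (dLinf P) ξ (ξs n)) atTop (𝓝 0) ↔
    ∃ (ξ' : Ω → X) (ξs' : ℕ → Ω → X), Measurable ξ' ∧ (∀ n, Measurable (ξs' n)) ∧
      Measure.map ξ' P = Measure.map ξ P ∧
      (∀ n, Measure.map (ξs' n) P = Measure.map (ξs n) P) ∧
      Tendsto (fun n => dLinf P ξ' (ξs' n)) atTop (𝓝 0) := by
  have : SecondCountableTopology X := UniformSpace.secondCountable_of_separable X
  exact tendsto_minPM_dLinf_zero_iff_general hrich (isLawInvariant_dLinf P) hξ hξs
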